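/- arXiv:1904.04182 — 2 statements merged into one kernel-verified Lean document; each statement's English description precedes it below -/
import Mathlib

section
/- For behaviors B₁ on Υ₁ = (M₁, C₁, O) and B₂ on Υ₂ = (M₂, C₂, O) with M₁ and M₂ disjoint, the contextual fraction of the controlled choice satisfies CF(B₁ & B₂) ≤ max(CF(B₁), CF(B₂)). -/
/-!
The key reformulation (`feasible_iff`): for a behavior `p` and `0 ≤ l ≤ 1`, a decomposition of
`p` with contextual weight `l` exists if and only if some distribution `d` on `O^M` satisfies
`(1 - l) * marg γ d ≤ p γ` on every context; the remainder, rescaled by `l`, is the contextual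
part. This condition is monotone in `l`. If `d₁` and `d₂` witness the weights `l₁` and `l₂` for
the two behaviors, then the product distribution `d₁ ⊗ d₂` on `O^(M₁ ⊕ M₂)` has marginals `d₁`
and `d₂` on the two blocks of measurements. As every context of the controlled choice lies in a
single block, `d₁ ⊗ d₂` witnesses the weight `max l₁ l₂` for the controlled choice. Taking infima
over `l₁` and `l₂` gives the bound.

The only degenerate case is an empty `O^(M₁ ⊕ M₂)`: no weight is then feasible, and `sInf ∅ = 0`.
-/

open Finset

/-- A family assigning to each context `γ` a real-valued function on joint
outcome assignments `↥γ → O`. Behaviors are such families. -/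
abbrev Fam (M O : Type) : Type := (γ : Finset M) → (↥γ → O) → ℝ

variable {M O : Type} [Fintype M] [DecidableEq M] [Fintype O] [DecidableEq O]

/-- `p` is a behavior for the scenario with contexts `C`: on every context it is a
probability distribution on joint outcomes. -/
def IsBehavior (C : Finset (Finset M)) (p : Fam M O) : Prop :=
  ∀ γ ∈ C, (∀ s, 0 ≤ p γ s) ∧ ∑ s, p γ s = 1

/-- Marginal of a global distribution `d` on `O^M` on the context `γ`. -/
def marg (γ : Finset M) (d : (M → O) → ℝ) (s : ↥γ → O) : ℝ :=
  ∑ f : M → O, if (fun x : ↥γ => f x.1) = s then d f else 0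

/-- A behavior is non-contextual when it admits a global section: a probability
distribution on `O^M` marginalizing to `p γ` on every context `γ ∈ C`. -/
def NonContextual (C : Finset (Finset M)) (p : Fam M O) : Prop :=
  ∃ d : (M → O) → ℝ, (∀ f, 0 ≤ d f) ∧ (∑ f, d f = 1) ∧
    ∀ γ ∈ C, ∀ s, p γ s = marg γ d s

/-- The contextual fraction: the infimum of `l ∈ [0,1]` such that the behavior
decomposes as `l B' + (1-l) B^NC` with `B'` a behavior and `B^NC` non-contextual. -/
noncomputable def CF (C : Finset (Finset M)) (p : Fam M O) : ℝ :=
  sInf {l : ℝ | 0 ≤ l ∧ l ≤ 1 ∧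
    ∃ p' pnc : Fam M O, IsBehavior C p' ∧ IsBehavior C pnc ∧ NonContextual C pnc ∧
      ∀ γ ∈ C, ∀ s, p γ s = l * p' γ s + (1 - l) * pnc γ s}

variable {M₁ M₂ : Type} [Fintype M₁] [DecidableEq M₁] [Fintype M₂] [DecidableEq M₂]

/-- Embedding of the first set of measurements into the disjoint union. -/
def inlEmb (M₁ M₂ : Type) : M₁ ↪ M₁ ⊕ M₂ := ⟨Sum.inl, Sum.inl_injective⟩

/-- Embedding of the second set of measurements into the disjoint union. -/
def inrEmb (M₁ M₂ : Type) : M₂ ↪ M₁ ⊕ M₂ := ⟨Sum.inr, Sum.inr_injective⟩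

/-- The context `γ₁ ∪ γ₂` inside the disjoint union of measurements. -/
def joinCtx (γ₁ : Finset M₁) (γ₂ : Finset M₂) : Finset (M₁ ⊕ M₂) :=
  γ₁.map (inlEmb M₁ M₂) ∪ γ₂.map (inrEmb M₁ M₂)

/-- Contexts of the product scenario: `{γ₁ ∪ γ₂ : γ₁ ∈ C₁, γ₂ ∈ C₂}`. -/
def prodC (C₁ : Finset (Finset M₁)) (C₂ : Finset (Finset M₂)) : Finset (Finset (M₁ ⊕ M₂)) :=
  (C₁ ×ˢ C₂).image fun gg => joinCtx gg.1 gg.2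

/-- Contexts of the controlled-choice scenario: `C₁ ∪ C₂`. -/
def ccC (C₁ : Finset (Finset M₁)) (C₂ : Finset (Finset M₂)) : Finset (Finset (M₁ ⊕ M₂)) :=
  C₁.image (fun γ => γ.map (inlEmb M₁ M₂)) ∪ C₂.image (fun γ => γ.map (inrEmb M₁ M₂))

/-- Restriction of a joint outcome assignment on `γ₁ ∪ γ₂` to `γ₁`. -/
def restr1 (γ₁ : Finset M₁) (γ₂ : Finset M₂) (s : ↥(joinCtx γ₁ γ₂) → O) : ↥γ₁ → O :=
  fun x => s ⟨Sum.inl x.1, Finset.mem_union_left _ (Finset.mem_map_of_mem _ x.2)⟩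

/-- Restriction of a joint outcome assignment on `γ₁ ∪ γ₂` to `γ₂`. -/
def restr2 (γ₁ : Finset M₁) (γ₂ : Finset M₂) (s : ↥(joinCtx γ₁ γ₂) → O) : ↥γ₂ → O :=
  fun x => s ⟨Sum.inr x.1, Finset.mem_union_right _ (Finset.mem_map_of_mem _ x.2)⟩

/-- Identification of outcome assignments on the copy of `γ ∈ C₁` inside `M₁ ⊕ M₂`
with outcome assignments on `γ`. -/
def restrL (γ : Finset M₁) (s : ↥(γ.map (inlEmb M₁ M₂)) → O) : ↥γ → O :=
  fun x => s ⟨Sum.inl x.1, Finset.mem_map_of_mem _ x.2⟩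

/-- Identification of outcome assignments on the copy of `γ ∈ C₂` inside `M₁ ⊕ M₂`
with outcome assignments on `γ`. -/
def restrR (γ : Finset M₂) (s : ↥(γ.map (inrEmb M₁ M₂)) → O) : ↥γ → O :=
  fun x => s ⟨Sum.inr x.1, Finset.mem_map_of_mem _ x.2⟩

/-- The set of weights `l` whose infimum is the contextual fraction. -/
def weights (C : Finset (Finset M)) (p : Fam M O) : Set ℝ :=
  {l : ℝ | 0 ≤ l ∧ l ≤ 1 ∧
    ∃ p' pnc : Fam M O, IsBehavior C p' ∧ IsBehavior C pnc ∧ NonContextual C pnc ∧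
      ∀ γ ∈ C, ∀ s, p γ s = l * p' γ s + (1 - l) * pnc γ s}

theorem marg_nonneg (γ : Finset M) {d : (M → O) → ℝ} (hd : ∀ f, 0 ≤ d f) (s : ↥γ → O) :
    0 ≤ marg γ d s :=
  Finset.sum_nonneg fun f _ => by split_ifs <;> simp [hd f]

theorem sum_marg (γ : Finset M) (d : (M → O) → ℝ) : ∑ s, marg γ d s = ∑ f, d f := by
  unfold marg
  rw [Finset.sum_comm]
  simp

theorem isBehavior_marg (C : Finset (Finset M)) {d : (M → O) → ℝ} (hd : ∀ f, 0 ≤ d f)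
    (hd1 : ∑ f, d f = 1) : IsBehavior C (fun γ s => marg γ d s) :=
  fun γ _ => ⟨marg_nonneg γ hd, by rw [sum_marg, hd1]⟩

/-- A weight `l` is feasible exactly when `p` dominates `1 - l` times the marginals of some
global distribution. -/
theorem feasible_iff {C : Finset (Finset M)} {p : Fam M O} (hp : IsBehavior C p) (l : ℝ) :
    l ∈ weights C p ↔ 0 ≤ l ∧ l ≤ 1 ∧ ∃ d : (M → O) → ℝ, (∀ f, 0 ≤ d f) ∧ (∑ f, d f = 1) ∧
      ∀ γ ∈ C, ∀ s, (1 - l) * marg γ d s ≤ p γ s := by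
  constructor
  · rintro ⟨h0, h1, p', pnc, hp', -, ⟨d, hd, hd1, hm⟩, hdec⟩
    refine ⟨h0, h1, d, hd, hd1, fun γ hγ s => ?_⟩
    rw [hdec γ hγ s, hm γ hγ s]
    linarith [mul_nonneg h0 ((hp' γ hγ).1 s)]
  · rintro ⟨h0, h1, d, hd, hd1, hle⟩
    have hmarg := isBehavior_marg C hd hd1
    have hnc : NonContextual C (fun γ s => marg γ d s) := ⟨d, hd, hd1, fun _ _ _ => rfl⟩
    rcases h0.eq_or_lt with rfl | hpos
    -- For weight `0`, domination between two distributions forces equality.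
    · refine ⟨h0, h1, _, _, hmarg, hmarg, hnc, fun γ hγ s => ?_⟩
      have hsum : ∑ s, marg γ d s = ∑ s, p γ s := by rw [sum_marg, hd1, (hp γ hγ).2]
      have heq := (Finset.sum_eq_sum_iff_of_le
        (fun s _ => by simpa using hle γ hγ s)).1 hsum s (Finset.mem_univ s)
      simp [heq]
    · refine ⟨h0, h1, fun γ s => (p γ s - (1 - l) * marg γ d s) / l, _,
        fun γ hγ => ⟨fun s => div_nonneg (sub_nonneg.2 (hle γ hγ s)) h0, ?_⟩,
        hmarg, hnc, fun γ hγ s => ?_⟩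
      · rw [← Finset.sum_div, Finset.sum_sub_distrib, ← Finset.mul_sum, sum_marg, hd1,
          (hp γ hγ).2]
        field_simp
        ring
      · field_simp
        ring

/-- Marginals on a transported context: if `d'` is the pushforward of `d` under restriction of
assignments along `e`, then the marginal of `d` on `γ.map e` is the marginal of `d'` on `γ`. -/
theorem marg_map {N : Type} [Fintype N] [DecidableEq N] (e : M ↪ N) (γ : Finset M)
    (d : (N → O) → ℝ) (d' : (M → O) → ℝ)
    (hd : ∀ g, (∑ f : N → O, if (fun x => f (e x)) = g then d f else 0) = d' g)
    (s : ↥(γ.map e) → O) :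
    marg (γ.map e) d s = marg γ d' (fun x => s ⟨e x.1, Finset.mem_map_of_mem _ x.2⟩) := by
  have key (f : N → O) : (fun x : ↥(γ.map e) => f x.1) = s ↔
      (fun x : ↥γ => f (e x.1)) = fun x => s ⟨e x.1, Finset.mem_map_of_mem _ x.2⟩ := by
    constructor
    · rintro rfl
      rfl
    · intro h
      funext ⟨y, hy⟩
      obtain ⟨x, hx, rfl⟩ := Finset.mem_map.1 hy
      exact congrFun h ⟨x, hx⟩
  unfold marg
  simp_rw [← hd, key, ← Finset.sum_filter]
  rw [Finset.sum_filter, ← Finset.sum_fiberwise Finset.univ (fun f x => f (e x)), Finset.sum_filter]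
  refine Finset.sum_congr rfl fun g _ => ?_
  split_ifs with hg
  · refine Finset.sum_congr rfl fun f hf => if_pos ?_
    rw [← hg, ← (Finset.mem_filter.1 hf).2]
  · refine Finset.sum_eq_zero fun f hf => if_neg fun h => hg ?_
    rw [← (Finset.mem_filter.1 hf).2, h]

/-- Outcome assignments on `γ.map e` and on `γ` correspond bijectively. -/
theorem sum_map {N : Type} [DecidableEq N] (e : M ↪ N) (γ : Finset M) (F : (↥γ → O) → ℝ) :
    (∑ s : ↥(γ.map e) → O, F (fun x => s ⟨e x.1, Finset.mem_map_of_mem _ x.2⟩)) = ∑ t, F t := by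
  refine Function.Bijective.sum_comp
    (e := fun (s : ↥(γ.map e) → O) (x : ↥γ) => s ⟨e x.1, Finset.mem_map_of_mem _ x.2⟩)
    ⟨fun s s' h => ?_, fun t => ?_⟩ F
  · funext ⟨y, hy⟩
    obtain ⟨x, hx, rfl⟩ := Finset.mem_map.1 hy
    exact congrFun h ⟨x, hx⟩
  · refine ⟨fun y => t ⟨(Finset.mem_map.1 y.2).choose, (Finset.mem_map.1 y.2).choose_spec.1⟩, ?_⟩
    funext x
    have h := (Finset.mem_map.1 (Finset.mem_map_of_mem e x.2)).choose_spec.2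
    exact congrArg t (Subtype.ext (e.injective h))

/-- The product of a distribution on `O^M₁` and one on `O^M₂`. -/
def prodDist (d₁ : (M₁ → O) → ℝ) (d₂ : (M₂ → O) → ℝ) (f : M₁ ⊕ M₂ → O) : ℝ :=
  d₁ (fun x => f (Sum.inl x)) * d₂ (fun x => f (Sum.inr x))

theorem sum_sumArrow (F : (M₁ → O) → (M₂ → O) → ℝ) :
    (∑ f : M₁ ⊕ M₂ → O, F (fun x => f (Sum.inl x)) (fun x => f (Sum.inr x))) =
      ∑ f₁, ∑ f₂, F f₁ f₂ := by
  rw [← Fintype.sum_prod_type']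
  exact Fintype.sum_equiv (Equiv.sumArrowEquivProdArrow M₁ M₂ O) _ _ fun _ => rfl

theorem sum_prodDist (d₁ : (M₁ → O) → ℝ) (d₂ : (M₂ → O) → ℝ) :
    ∑ f, prodDist d₁ d₂ f = (∑ f, d₁ f) * ∑ f, d₂ f := by
  unfold prodDist
  rw [sum_sumArrow fun f₁ f₂ => d₁ f₁ * d₂ f₂, Finset.sum_mul_sum]

theorem marg_prodDist_inl (γ : Finset M₁) (d₁ : (M₁ → O) → ℝ) {d₂ : (M₂ → O) → ℝ}
    (h₂ : ∑ f, d₂ f = 1) (s : ↥(γ.map (inlEmb M₁ M₂)) → O) :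
    marg (γ.map (inlEmb M₁ M₂)) (prodDist d₁ d₂) s = marg γ d₁ (restrL γ s) := by
  refine marg_map (inlEmb M₁ M₂) γ _ d₁ (fun g => ?_) s
  refine (sum_sumArrow fun f₁ f₂ => if f₁ = g then d₁ f₁ * d₂ f₂ else 0).trans ?_
  rw [Finset.sum_comm]
  simp [← Finset.mul_sum, h₂]

theorem marg_prodDist_inr (γ : Finset M₂) {d₁ : (M₁ → O) → ℝ} (d₂ : (M₂ → O) → ℝ)
    (h₁ : ∑ f, d₁ f = 1) (s : ↥(γ.map (inrEmb M₁ M₂)) → O) :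
    marg (γ.map (inrEmb M₁ M₂)) (prodDist d₁ d₂) s = marg γ d₂ (restrR γ s) := by
  refine marg_map (inrEmb M₁ M₂) γ _ d₂ (fun g => ?_) s
  refine (sum_sumArrow fun f₁ f₂ => if f₂ = g then d₁ f₁ * d₂ f₂ else 0).trans ?_
  simp [← Finset.sum_mul, h₁]

/-- When a global assignment exists, the weight `1` is feasible. -/
theorem one_mem_weights {C : Finset (Finset M)} {p : Fam M O} (hp : IsBehavior C p)
    (g : M → O) : (1 : ℝ) ∈ weights C p := by
  refine (feasible_iff hp 1).2 ⟨zero_le_one, le_rfl, fun f => if f = g then 1 else 0,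
    fun f => by dsimp only; split_ifs <;> simp, by simp, fun γ hγ s => ?_⟩
  simpa using (hp γ hγ).1 s

/-- The controlled choice of two behaviors is a behavior. -/
theorem isBehavior_cc {C₁ : Finset (Finset M₁)} {C₂ : Finset (Finset M₂)}
    {p₁ : Fam M₁ O} {p₂ : Fam M₂ O} {pcc : Fam (M₁ ⊕ M₂) O}
    (h₁ : IsBehavior C₁ p₁) (h₂ : IsBehavior C₂ p₂)
    (hccL : ∀ γ ∈ C₁, ∀ s, pcc (γ.map (inlEmb M₁ M₂)) s = p₁ γ (restrL γ s))
    (hccR : ∀ γ ∈ C₂, ∀ s, pcc (γ.map (inrEmb M₁ M₂)) s = p₂ γ (restrR γ s)) :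
    IsBehavior (ccC C₁ C₂) pcc := by
  intro δ hδ
  rcases Finset.mem_union.1 hδ with h | h <;> obtain ⟨γ, hγ, rfl⟩ := Finset.mem_image.1 h
  · refine ⟨fun s => hccL γ hγ s ▸ (h₁ γ hγ).1 _, ?_⟩
    rw [Finset.sum_congr rfl fun s _ => hccL γ hγ s, ← (h₁ γ hγ).2]
    exact sum_map (inlEmb M₁ M₂) γ (p₁ γ)
  · refine ⟨fun s => hccR γ hγ s ▸ (h₂ γ hγ).1 _, ?_⟩
    rw [Finset.sum_congr rfl fun s _ => hccR γ hγ s, ← (h₂ γ hγ).2]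
    exact sum_map (inrEmb M₁ M₂) γ (p₂ γ)

/-- The product of witnesses for `l₁` and `l₂` is a witness for `max l₁ l₂`. -/
theorem max_mem_weights {C₁ : Finset (Finset M₁)} {C₂ : Finset (Finset M₂)}
    {p₁ : Fam M₁ O} {p₂ : Fam M₂ O} {pcc : Fam (M₁ ⊕ M₂) O}
    (h₁ : IsBehavior C₁ p₁) (h₂ : IsBehavior C₂ p₂)
    (hccL : ∀ γ ∈ C₁, ∀ s, pcc (γ.map (inlEmb M₁ M₂)) s = p₁ γ (restrL γ s))
    (hccR : ∀ γ ∈ C₂, ∀ s, pcc (γ.map (inrEmb M₁ M₂)) s = p₂ γ (restrR γ s))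
    {l₁ l₂ : ℝ} (hl₁ : l₁ ∈ weights C₁ p₁) (hl₂ : l₂ ∈ weights C₂ p₂) :
    max l₁ l₂ ∈ weights (ccC C₁ C₂) pcc := by
  obtain ⟨ha0, ha1, d₁, hd₁, hs₁, hle₁⟩ := (feasible_iff h₁ l₁).1 hl₁
  obtain ⟨-, hb1, d₂, hd₂, hs₂, hle₂⟩ := (feasible_iff h₂ l₂).1 hl₂
  refine (feasible_iff (isBehavior_cc h₁ h₂ hccL hccR) _).2 ⟨le_max_of_le_left ha0,
    max_le ha1 hb1, prodDist d₁ d₂, fun f => mul_nonneg (hd₁ _) (hd₂ _), ?_, fun δ hδ s => ?_⟩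
  · rw [sum_prodDist, hs₁, hs₂, one_mul]
  rcases Finset.mem_union.1 hδ with h | h <;> obtain ⟨γ, hγ, rfl⟩ := Finset.mem_image.1 h
  · rw [hccL γ hγ s, marg_prodDist_inl γ d₁ hs₂]
    exact (mul_le_mul_of_nonneg_right (sub_le_sub_left (le_max_left _ _) 1)
      (marg_nonneg γ hd₁ _)).trans (hle₁ γ hγ _)
  · rw [hccR γ hγ s, marg_prodDist_inr γ d₂ hs₁]
    exact (mul_le_mul_of_nonneg_right (sub_le_sub_left (le_max_right _ _) 1)
      (marg_nonneg γ hd₂ _)).trans (hle₂ γ hγ _)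

/-- The contextual fraction of the controlled choice is at most the maximum of the
contextual fractions. -/
theorem cf_controlled_choice
    (C₁ : Finset (Finset M₁)) (C₂ : Finset (Finset M₂))
    (p₁ : Fam M₁ O) (p₂ : Fam M₂ O) (pcc : Fam (M₁ ⊕ M₂) O)
    (h₁ : IsBehavior C₁ p₁) (h₂ : IsBehavior C₂ p₂)
    (hccL : ∀ γ ∈ C₁, ∀ s, pcc (γ.map (inlEmb M₁ M₂)) s = p₁ γ (restrL γ s))
    (hccR : ∀ γ ∈ C₂, ∀ s, pcc (γ.map (inrEmb M₁ M₂)) s = p₂ γ (restrR γ s)) :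
    CF (ccC C₁ C₂) pcc ≤ max (CF C₁ p₁) (CF C₂ p₂) := by
  have bdd : BddBelow (weights (ccC C₁ C₂) pcc) := ⟨0, fun l hl => hl.1⟩
  rcases isEmpty_or_nonempty (M₁ ⊕ M₂ → O) with hE | ⟨⟨g⟩⟩
  -- Without global assignments the left-hand side is the junk value `sInf ∅ = 0`.
  · have hempty : weights (ccC C₁ C₂) pcc = ∅ := by
      refine Set.eq_empty_of_forall_notMem ?_
      rintro l ⟨-, -, -, -, -, -, ⟨d, -, hd1, -⟩, -⟩
      simp at hd1
    change sInf (weights (ccC C₁ C₂) pcc) ≤ _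
    rw [hempty, Real.sInf_empty]
    exact le_max_of_le_left (Real.sInf_nonneg fun l hl => hl.1)
  · refine le_of_forall_gt fun c hc => ?_
    obtain ⟨l₁, hl₁, hlt₁⟩ := exists_lt_of_csInf_lt
      ⟨1, one_mem_weights h₁ fun x => g (Sum.inl x)⟩ ((le_max_left _ _).trans_lt hc)
    obtain ⟨l₂, hl₂, hlt₂⟩ := exists_lt_of_csInf_lt
      ⟨1, one_mem_weights h₂ fun x => g (Sum.inr x)⟩ ((le_max_right _ _).trans_lt hc)
    exact (csInf_le bdd (max_mem_weights h₁ h₂ hccL hccR hl₁ hl₂)).trans_lt (max_lt hlt₁ hlt₂)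
end

section
/- The ℓ1-uniform contextuality distance is monotone under non-contextual measurement-wise post-processing: if B' is obtained from a behavior B on a compatibility scenario Υ by a non-contextual measurement-wise post-processing, then D_u(B') ≤ D_u(B). -/
/-!
For each context `γ`, post-processing acts on `p γ` as a single stochastic matrix `kern`, obtained
by averaging over the shared randomness the product of the local stochastic matrices. The theorem
follows from two properties of these matrices.

* Being stochastic, `kern` contracts the ℓ1 distance (`l1_postProc_le`).
* The matrix on the full set `M` of measurements restricts to the one on `γ`: summing over the
  outcomes outside `γ` removes the corresponding factors (`sum_restrict_kern`). Hence processing a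
  global section of a behavior gives a global section of the processed behavior, and
  post-processing preserves non-contextuality (`nonContextual_postProc`).

Therefore each non-contextual candidate `r` for `p` yields the candidate `postProc μ q r` for
`postProc μ q p`, at a distance which is no larger; take infima.
-/

open Finset

variable {M O : Type} [Fintype M] [DecidableEq M] [Fintype O] [DecidableEq O]

/-- The ℓ1-uniform contextuality distance. -/
noncomputable def Du (C : Finset (Finset M)) (p : Fam M O) : ℝ :=
  (C.card : ℝ)⁻¹ * sInf {d : ℝ | ∃ q : Fam M O, IsBehavior C q ∧ NonContextual C q ∧
    d = ∑ γ ∈ C, ∑ s, |p γ s - q γ s|}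

/-- Non-contextual measurement-wise post-processing of a behavior: shared randomness
`μ` on `Φ` and stochastic matrices `q x φ` with `q x φ t s = q_x^φ(t|s)`, giving
`p' γ t = ∑ φ, μ φ ∑ s (∏_{x ∈ γ} q_x^φ(t x | s x)) p γ s`. -/
noncomputable def postProc {Φ : Type} [Fintype Φ] (μ : Φ → ℝ) (q : M → Φ → O → O → ℝ)
    (p : Fam M O) : Fam M O :=
  fun γ t => ∑ φ, μ φ * ∑ s : ↥γ → O, (∏ x : ↥γ, q x.1 φ (t x) (s x)) * p γ s

/-- The stochastic matrix by which post-processing acts on joint outcomes of measurements indexed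
by `ι`: the product of the local matrices `q x φ`, averaged over the shared randomness `φ`. Taking
`ι = ↥γ` gives the action on a context, and `ι = M` the action on global assignments. -/
noncomputable def kern {ι Φ O : Type} [Fintype ι] [Fintype Φ] (μ : Φ → ℝ)
    (q : ι → Φ → O → O → ℝ) (t s : ι → O) : ℝ :=
  ∑ φ, μ φ * ∏ x, q x φ (t x) (s x)

lemma kern_nonneg {ι Φ O : Type} [Fintype ι] [Fintype Φ] {μ : Φ → ℝ} (hμ0 : ∀ φ, 0 ≤ μ φ)
    {q : ι → Φ → O → O → ℝ} (hq0 : ∀ x φ t s, 0 ≤ q x φ t s) (t s : ι → O) :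
    0 ≤ kern μ q t s :=
  Finset.sum_nonneg fun φ _ => mul_nonneg (hμ0 φ) (Finset.prod_nonneg fun _ _ => hq0 _ _ _ _)

lemma sum_kern {ι Φ O : Type} [Fintype ι] [DecidableEq ι] [Fintype Φ] [Fintype O] {μ : Φ → ℝ}
    (hμ1 : ∑ φ, μ φ = 1) {q : ι → Φ → O → O → ℝ} (hq1 : ∀ x φ s, ∑ t, q x φ t s = 1)
    (s : ι → O) : ∑ t, kern μ q t s = 1 := by
  unfold kern
  rw [Finset.sum_comm, ← hμ1]
  refine Finset.sum_congr rfl fun φ _ => ?_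
  rw [← Finset.mul_sum, ← Fintype.prod_sum (fun x o => q x φ o (s x))]
  simp [hq1]

lemma sum_kern_mul {ι Φ O : Type} [Fintype ι] [DecidableEq ι] [Fintype Φ] [Fintype O] {μ : Φ → ℝ}
    (hμ1 : ∑ φ, μ φ = 1) {q : ι → Φ → O → O → ℝ} (hq1 : ∀ x φ s, ∑ t, q x φ t s = 1)
    (u : (ι → O) → ℝ) : ∑ t, ∑ s, kern μ q t s * u s = ∑ s, u s := by
  rw [Finset.sum_comm]
  refine Finset.sum_congr rfl fun s _ => ?_
  rw [← Finset.sum_mul, sum_kern hμ1 hq1, one_mul]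

lemma postProc_eq_kern {Φ : Type} [Fintype Φ] (μ : Φ → ℝ) (q : M → Φ → O → O → ℝ) (p : Fam M O)
    (γ : Finset M) (t : ↥γ → O) :
    postProc μ q p γ t = ∑ s, kern μ (fun x : ↥γ => q x.1) t s * p γ s := by
  simp only [postProc, kern, Finset.mul_sum, Finset.sum_mul, mul_assoc]
  exact Finset.sum_comm

/-- For a fixed value of the shared randomness, summing the product of local matrices over all
global assignments `g` extending `t` leaves only the factors in `γ`. -/
lemma sum_restrict_prod (γ : Finset M) (k : M → O → O → ℝ)
    (hk : ∀ x s, ∑ t, k x t s = 1) (t : ↥γ → O) (f : M → O) :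
    (∑ g : M → O, if (fun x : ↥γ => g x.1) = t then ∏ x, k x (g x) (f x) else 0)
      = ∏ x : ↥γ, k x.1 (t x) (f x.1) := by
  -- The constraint `g|γ = t` is a product of local constraints, so the sum factorizes over `M`.
  have h1 : ∀ g : M → O,
      (if (fun x : ↥γ => g x.1) = t then ∏ x, k x (g x) (f x) else 0)
        = ∏ x, if ∀ h : x ∈ γ, g x = t ⟨x, h⟩ then k x (g x) (f x) else 0 := by
    intro g
    by_cases hg : (fun x : ↥γ => g x.1) = t
    · subst hg
      simp
    · rw [if_neg hg]
      obtain ⟨x, hx⟩ := Function.ne_iff.mp hg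
      refine (Finset.prod_eq_zero (Finset.mem_univ x.1) ?_).symm
      rw [if_neg]
      exact fun h => hx (h x.2)
  simp only [h1]
  rw [← Fintype.prod_sum (fun x o => if ∀ h : x ∈ γ, o = t ⟨x, h⟩ then k x o (f x) else 0)]
  have h2 : ∀ x, x ∉ γ →
      (∑ o, if ∀ h : x ∈ γ, o = t ⟨x, h⟩ then k x o (f x) else 0) = 1 := by
    intro x hx
    simp [hx, hk]
  rw [← Finset.prod_subset (Finset.subset_univ γ) fun x _ hx => h2 x hx, ← Finset.prod_coe_sort]
  refine Finset.prod_congr rfl fun x _ => ?_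
  simp

lemma sum_restrict_kern {Φ : Type} [Fintype Φ] (μ : Φ → ℝ) (q : M → Φ → O → O → ℝ)
    (hq1 : ∀ x φ s, ∑ t, q x φ t s = 1) (γ : Finset M) (t : ↥γ → O) (f : M → O) :
    (∑ g : M → O, if (fun x : ↥γ => g x.1) = t then kern μ q g f else 0)
      = kern μ (fun x : ↥γ => q x.1) t (fun x => f x.1) := by
  unfold kern
  have h : ∀ φ, ∏ x : ↥γ, q x.1 φ (t x) (f x.1) = _ := fun φ =>
    (sum_restrict_prod γ (fun x => q x φ) (fun x s => hq1 x φ s) t f).symm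
  simp only [h, Finset.mul_sum]
  rw [Finset.sum_comm]
  refine Finset.sum_congr rfl fun g _ => ?_
  split_ifs <;> simp

lemma sum_mul_marg (γ : Finset M) (d : (M → O) → ℝ) (u : (↥γ → O) → ℝ) :
    ∑ s, u s * marg γ d s = ∑ f, u (fun x => f x.1) * d f := by
  simp only [marg, Finset.mul_sum]
  rw [Finset.sum_comm]
  simp

lemma isBehavior_postProc {Φ : Type} [Fintype Φ] {μ : Φ → ℝ} (hμ0 : ∀ φ, 0 ≤ μ φ)
    (hμ1 : ∑ φ, μ φ = 1) {q : M → Φ → O → O → ℝ} (hq0 : ∀ x φ t s, 0 ≤ q x φ t s)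
    (hq1 : ∀ x φ s, ∑ t, q x φ t s = 1) {C : Finset (Finset M)} {p : Fam M O}
    (hp : IsBehavior C p) : IsBehavior C (postProc μ q p) := by
  intro γ hγ
  simp only [postProc_eq_kern]
  refine ⟨fun t => Finset.sum_nonneg fun s _ =>
    mul_nonneg (kern_nonneg hμ0 (fun x => hq0 x.1) t s) ((hp γ hγ).1 s), ?_⟩
  rw [sum_kern_mul (q := fun x : ↥γ => q x.1) hμ1 (fun x => hq1 x.1), (hp γ hγ).2]

/-- Post-processing preserves non-contextuality: if `d` is a global section of `p`, then its image
under the stochastic matrix on all of `M` is a global section of the processed behavior. -/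
lemma nonContextual_postProc {Φ : Type} [Fintype Φ] {μ : Φ → ℝ} (hμ0 : ∀ φ, 0 ≤ μ φ)
    (hμ1 : ∑ φ, μ φ = 1) {q : M → Φ → O → O → ℝ} (hq0 : ∀ x φ t s, 0 ≤ q x φ t s)
    (hq1 : ∀ x φ s, ∑ t, q x φ t s = 1) {C : Finset (Finset M)} {p : Fam M O}
    (hp : NonContextual C p) : NonContextual C (postProc μ q p) := by
  obtain ⟨d, hd0, hd1, hd⟩ := hp
  refine ⟨fun g => ∑ f, kern μ q g f * d f,
    fun g => Finset.sum_nonneg fun f _ => mul_nonneg (kern_nonneg hμ0 hq0 g f) (hd0 f),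
    (sum_kern_mul hμ1 hq1 d).trans hd1, fun γ hγ t => ?_⟩
  rw [postProc_eq_kern]
  simp only [hd γ hγ]
  rw [sum_mul_marg]
  simp only [← sum_restrict_kern μ q hq1, Finset.sum_mul, marg]
  rw [Finset.sum_comm]
  refine Finset.sum_congr rfl fun g _ => ?_
  split_ifs <;> simp

lemma l1_postProc_le {Φ : Type} [Fintype Φ] {μ : Φ → ℝ} (hμ0 : ∀ φ, 0 ≤ μ φ)
    (hμ1 : ∑ φ, μ φ = 1) {q : M → Φ → O → O → ℝ} (hq0 : ∀ x φ t s, 0 ≤ q x φ t s)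
    (hq1 : ∀ x φ s, ∑ t, q x φ t s = 1) (p r : Fam M O) (γ : Finset M) :
    ∑ t, |postProc μ q p γ t - postProc μ q r γ t| ≤ ∑ s, |p γ s - r γ s| := by
  rw [← sum_kern_mul (μ := μ) (q := fun x : ↥γ => q x.1) hμ1 (fun x => hq1 x.1)
    (fun s => |p γ s - r γ s|)]
  refine Finset.sum_le_sum fun t _ => ?_
  rw [postProc_eq_kern, postProc_eq_kern, ← Finset.sum_sub_distrib]
  refine (Finset.abs_sum_le_sum_abs _ _).trans_eq (Finset.sum_congr rfl fun s _ => ?_)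
  rw [← mul_sub, abs_mul, abs_of_nonneg (kern_nonneg hμ0 (fun x => hq0 x.1) t s)]

/-- The ℓ1-uniform contextuality distance is monotone under non-contextual
measurement-wise post-processing. -/
theorem du_monotone_postProc
    {Φ : Type} [Fintype Φ] (μ : Φ → ℝ) (hμ0 : ∀ φ, 0 ≤ μ φ) (hμ1 : ∑ φ, μ φ = 1)
    (q : M → Φ → O → O → ℝ) (hq0 : ∀ x φ t s, 0 ≤ q x φ t s)
    (hq1 : ∀ x φ s, ∑ t, q x φ t s = 1)
    (C : Finset (Finset M)) (p : Fam M O) (hp : IsBehavior C p) :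
    Du C (postProc μ q p) ≤ Du C p := by
  unfold Du
  refine mul_le_mul_of_nonneg_left ?_ (by positivity)
  rcases Set.eq_empty_or_nonempty {d : ℝ | ∃ r : Fam M O, IsBehavior C r ∧ NonContextual C r ∧
      d = ∑ γ ∈ C, ∑ s, |p γ s - r γ s|} with he | hne
  · -- Without any non-contextual behavior, which can only happen when there is no global
    -- assignment, both infima are over the empty set and have the junk value `0`.
    have he' : {d : ℝ | ∃ r : Fam M O, IsBehavior C r ∧ NonContextual C r ∧
        d = ∑ γ ∈ C, ∑ s, |postProc μ q p γ s - r γ s|} = ∅ := by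
      refine Set.eq_empty_of_forall_notMem ?_
      rintro d ⟨r, hr, hr', -⟩
      exact Set.eq_empty_iff_forall_notMem.mp he _ ⟨r, hr, hr', rfl⟩
    rw [he, he']
  · refine le_csInf hne ?_
    rintro d ⟨r, hr, hr', rfl⟩
    refine le_trans (csInf_le ⟨0, ?_⟩ ⟨postProc μ q r, isBehavior_postProc hμ0 hμ1 hq0 hq1 hr,
      nonContextual_postProc hμ0 hμ1 hq0 hq1 hr', rfl⟩)
      (Finset.sum_le_sum fun γ _ => l1_postProc_le hμ0 hμ1 hq0 hq1 p r γ)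
    rintro _ ⟨_, -, -, rfl⟩
    positivity
end
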